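/- For every x ∈ B^ℕ, the limit lim_{ℓ→∞} limsup_{n→∞} Hc^{n,ℓ}(x) exists and equals h̄(x). -/

import Mathlib

open Filter Topology

/-- The factor of length `len` of the sequence `x` starting at position `i`. -/
def factor (x : ℕ → Bool) (i len : ℕ) : List Bool :=
  List.ofFn (fun j : Fin len => x (i + j))

/-- Number of (possibly overlapping) occurrences of the word `u`
in the prefix `x[0:n)` of the sequence `x`. -/
def occ (x : ℕ → Bool) (n : ℕ) (u : List Bool) : ℕ :=
  ((Finset.range (n + 1 - u.length)).filter (fun i => factor x i u.length = u)).card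

/-- Non-aligned `ℓ`-block entropy of the prefix `x[0:n)`
(logs are base 2, with the convention `0 · log 0 = 0`). -/
noncomputable def hBlock (ℓ : ℕ) (x : ℕ → Bool) (n : ℕ) : ℝ :=
  -(1 / (ℓ : ℝ)) * ∑ u : Fin ℓ → Bool,
    ((occ x n (List.ofFn u) : ℝ) / ((n : ℝ) - ℓ + 1)) *
      Real.logb 2 ((occ x n (List.ofFn u) : ℝ) / ((n : ℝ) - ℓ + 1))

/-- `h̲(x) = lim_{ℓ→∞} liminf_{n→∞} h_ℓ(x[0:n))` (the limit in `ℓ` exists). -/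
noncomputable def hLow (x : ℕ → Bool) : ℝ :=
  atTop.liminf fun ℓ => atTop.liminf fun n => hBlock ℓ x n

/-- `h̄(x) = lim_{ℓ→∞} limsup_{n→∞} h_ℓ(x[0:n))` (the limit in `ℓ` exists). -/
noncomputable def hUp (x : ℕ → Bool) : ℝ :=
  atTop.limsup fun ℓ => atTop.limsup fun n => hBlock ℓ x n

/-- `γ_ℓ(x[0:n))`: normalized minimal number of prediction errors when predicting
`x[i]` from the preceding `ℓ` symbols `x[i-ℓ:i)`, for `i ∈ {ℓ,…,n-1}`. -/
noncomputable def gammaWord (ℓ : ℕ) (x : ℕ → Bool) (n : ℕ) : ℝ :=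
  (1 / ((n : ℝ) - ℓ)) *
    ((Finset.univ : Finset ((Fin ℓ → Bool) → Bool)).inf' Finset.univ_nonempty
      (fun f => ((((Finset.Ico ℓ n).filter
        (fun i => x i ≠ f (fun j => x (i - ℓ + j)))).card : ℝ))))

/-- `β_ℓ(x[0:n))`: normalized minimal number of prediction errors when predicting
`x[i]` from the following `ℓ` symbols `x[i+1:i+ℓ+1)`, for `i ∈ {0,…,n-ℓ-1}`. -/
noncomputable def betaWord (ℓ : ℕ) (x : ℕ → Bool) (n : ℕ) : ℝ :=
  (1 / ((n : ℝ) - ℓ)) *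
    ((Finset.univ : Finset ((Fin ℓ → Bool) → Bool)).inf' Finset.univ_nonempty
      (fun f => ((((Finset.range (n - ℓ)).filter
        (fun i => x i ≠ f (fun j => x (i + 1 + j)))).card : ℝ))))

/-- `γ̲(x) = lim_{ℓ→∞} liminf_{n→∞} γ_ℓ(x[0:n))` (the limit in `ℓ` exists, by monotonicity). -/
noncomputable def gammaLow (x : ℕ → Bool) : ℝ :=
  atTop.liminf fun ℓ => atTop.liminf fun n => gammaWord ℓ x n

/-- `γ̄(x) = lim_{ℓ→∞} limsup_{n→∞} γ_ℓ(x[0:n))` (the limit in `ℓ` exists, by monotonicity). -/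
noncomputable def gammaUp (x : ℕ → Bool) : ℝ :=
  atTop.limsup fun ℓ => atTop.limsup fun n => gammaWord ℓ x n

/-- `β̲(x) = lim_{ℓ→∞} liminf_{n→∞} β_ℓ(x[0:n))` (the limit in `ℓ` exists, by monotonicity). -/
noncomputable def betaLow (x : ℕ → Bool) : ℝ :=
  atTop.liminf fun ℓ => atTop.liminf fun n => betaWord ℓ x n

/-- `β̄(x) = lim_{ℓ→∞} limsup_{n→∞} β_ℓ(x[0:n))` (the limit in `ℓ` exists, by monotonicity). -/
noncomputable def betaUp (x : ℕ → Bool) : ℝ :=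
  atTop.limsup fun ℓ => atTop.limsup fun n => betaWord ℓ x n

/-- Binary Shannon entropy function `H(α) = -α log α - (1-α) log (1-α)` (base-2 logs). -/
noncomputable def binEntropy (a : ℝ) : ℝ :=
  -(a * Real.logb 2 a) - (1 - a) * Real.logb 2 (1 - a)

/-- Conditional block entropy `Hc^{n,ℓ}(x)`:
`-Σ_{ā ∈ B^ℓ, a ∈ B, p(ā·a) > 0} p(ā·a) · log (p(ā·a)/p(ā))`, where
`p(ā) = occ(x[0:n-1), ā)/(n-ℓ)` and `p(ā·a) = occ(x[0:n), ā·a)/(n-ℓ)`. -/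
noncomputable def condEntropy (ℓ : ℕ) (x : ℕ → Bool) (n : ℕ) : ℝ :=
  -∑ u : Fin ℓ → Bool, ∑ a : Bool,
    (if 0 < ((occ x n (List.ofFn u ++ [a]) : ℝ) / ((n : ℝ) - ℓ)) then
      ((occ x n (List.ofFn u ++ [a]) : ℝ) / ((n : ℝ) - ℓ)) *
        Real.logb 2 (((occ x n (List.ofFn u ++ [a]) : ℝ) / ((n : ℝ) - ℓ)) /
          ((occ x (n - 1) (List.ofFn u) : ℝ) / ((n : ℝ) - ℓ)))
    else 0)

/-- The real number in `[0,1]` denoted by the binary sequence `x`. -/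
noncomputable def val (x : ℕ → Bool) : ℝ :=
  ∑' n : ℕ, (if x n then (1 : ℝ) else 0) / 2 ^ (n + 1)

/-!
Let `H ℓ` be the entropy of the empirical distribution of the windows of length `ℓ` starting at
one of the first `m` positions. Then `ℓ * h_ℓ = H ℓ`, and by the chain rule the conditional block
entropy is the increment `d ℓ = H (ℓ + 1) - H ℓ`, so `h_ℓ` is the average of `d 0, …, d (ℓ - 1)`.
Strong subadditivity bounds `d (ℓ + 1)` by the value of `d ℓ` for the shifted sequence, and shifting
moves every empirical frequency by at most `1 / m`; hence `d` is antitone in `ℓ` up to an error that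
vanishes as `m → ∞`. It follows that `limsup d ℓ` is antitone in `ℓ`, and that `limsup h_ℓ` is
squeezed between `limsup d ℓ` and the Cesàro mean of `limsup d 0, …, limsup d (ℓ - 1)`, both of
which converge to the infimum of the `limsup d ℓ`.
-/

open scoped Finset

section NegMulLog

variable {ι κ : Type*} [Fintype ι] [Fintype κ]

theorem sum_mul_log_sum (p : ι → ℝ) :
    ∑ i, p i * Real.log (∑ j, p j) = -Real.negMulLog (∑ i, p i) := by
  rw [← Finset.sum_mul, Real.negMulLog, neg_mul, neg_neg]

theorem sum_negMulLog_sub_negMulLog_sum {p : ι → ℝ} (hp : ∀ i, 0 ≤ p i) :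
    ∑ i, Real.negMulLog (p i) - Real.negMulLog (∑ i, p i) =
      -∑ i, p i * Real.log (p i / ∑ j, p j) := by
  have expand (i : ι) : p i * Real.log (p i / ∑ j, p j) =
      -Real.negMulLog (p i) - p i * Real.log (∑ j, p j) := by
    rcases (hp i).eq_or_lt with hi | hi
    · simp [← hi]
    · have hsum : 0 < ∑ j, p j :=
        hi.trans_le (Finset.single_le_sum (fun j _ ↦ hp j) (Finset.mem_univ i))
      rw [Real.log_div hi.ne' hsum.ne', Real.negMulLog]
      ring
  simp only [expand, Finset.sum_sub_distrib, Finset.sum_neg_distrib, sum_mul_log_sum]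
  ring

theorem negMulLog_sum_le_sum_negMulLog {p : ι → ℝ} (hp : ∀ i, 0 ≤ p i) :
    Real.negMulLog (∑ i, p i) ≤ ∑ i, Real.negMulLog (p i) := by
  have hsum : 0 ≤ ∑ i, p i := Finset.sum_nonneg fun i _ ↦ hp i
  rw [← sub_nonneg, sum_negMulLog_sub_negMulLog_sum hp, Left.nonneg_neg_iff]
  refine Finset.sum_nonpos fun i _ ↦ mul_nonpos_of_nonneg_of_nonpos (hp i) ?_
  exact Real.log_nonpos (div_nonneg (hp i) hsum)
    (div_le_one_of_le₀ (Finset.single_le_sum (fun j _ ↦ hp j) (Finset.mem_univ i)) hsum)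

-- Gibbs' inequality for a single cell of a joint distribution `p` with marginals `r`, `c` and total
-- mass `t`, compared with the product distribution `r * c / t`.
theorem mul_log_add_log_sub_log_sub_log_le {p r c t : ℝ} (hp : 0 ≤ p) (hpr : p ≤ r) (hpc : p ≤ c)
    (hrt : r ≤ t) :
    p * (Real.log r + Real.log c - Real.log t - Real.log p) ≤ r * c / t - p := by
  rcases hp.eq_or_lt with rfl | hp
  · simpa using div_nonneg (mul_nonneg hpr hpc) (hpr.trans hrt)
  have hr : 0 < r := hp.trans_le hpr
  have hc : 0 < c := hp.trans_le hpc
  have ht : 0 < t := hr.trans_le hrt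
  calc p * (Real.log r + Real.log c - Real.log t - Real.log p)
      = p * Real.log (r * c / t / p) := by
        rw [Real.log_div (by positivity) hp.ne', Real.log_div (by positivity) ht.ne',
          Real.log_mul hr.ne' hc.ne']
    _ ≤ p * (r * c / t / p - 1) := by gcongr; exact Real.log_le_sub_one_of_pos (by positivity)
    _ = r * c / t - p := by field_simp

theorem sum_negMulLog_add_negMulLog_sum_le {p : ι → κ → ℝ} (hp : ∀ i j, 0 ≤ p i j) :
    ∑ i, ∑ j, Real.negMulLog (p i j) + Real.negMulLog (∑ i, ∑ j, p i j) ≤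
      ∑ i, Real.negMulLog (∑ j, p i j) + ∑ j, Real.negMulLog (∑ i, p i j) := by
  set r : ι → ℝ := fun i ↦ ∑ j, p i j
  set c : κ → ℝ := fun j ↦ ∑ i, p i j
  set t : ℝ := ∑ i, r i
  have hr_nonneg (i : ι) : 0 ≤ r i := Finset.sum_nonneg fun j _ ↦ hp i j
  have hpr (i : ι) (j : κ) : p i j ≤ r i :=
    Finset.single_le_sum (fun j _ ↦ hp i j) (Finset.mem_univ j)
  have hpc (i : ι) (j : κ) : p i j ≤ c j :=
    Finset.single_le_sum (fun i _ ↦ hp i j) (Finset.mem_univ i)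
  have hrt (i : ι) : r i ≤ t := Finset.single_le_sum (fun i _ ↦ hr_nonneg i) (Finset.mem_univ i)
  have hrow : ∑ i, ∑ j, p i j * Real.log (r i) = -∑ i, Real.negMulLog (r i) := by
    simp only [r, sum_mul_log_sum, Finset.sum_neg_distrib]
  have hcol : ∑ i, ∑ j, p i j * Real.log (c j) = -∑ j, Real.negMulLog (c j) := by
    rw [Finset.sum_comm]
    simp only [c, sum_mul_log_sum, Finset.sum_neg_distrib]
  have htotal : ∑ i, ∑ j, p i j * Real.log t = -Real.negMulLog t := by
    simp only [← Finset.sum_mul, t, r, Real.negMulLog, neg_mul, neg_neg]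
  have hself : ∑ i, ∑ j, p i j * Real.log (p i j) = -∑ i, ∑ j, Real.negMulLog (p i j) := by
    simp only [Real.negMulLog, neg_mul, Finset.sum_neg_distrib, neg_neg]
  have product_mass : ∑ i, ∑ j, (r i * c j / t - p i j) = 0 := by
    have hct : ∑ j, c j = t := Finset.sum_comm
    simp only [Finset.sum_sub_distrib, ← Finset.sum_div, ← Finset.mul_sum, ← Finset.sum_mul, hct]
    exact sub_eq_zero.2 (mul_self_div_self t)
  have gibbs : ∑ i, ∑ j, p i j *
      (Real.log (r i) + Real.log (c j) - Real.log t - Real.log (p i j)) ≤ 0 := by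
    rw [← product_mass]
    gcongr with i _ j _
    exact mul_log_add_log_sub_log_sub_log_le (hp i j) (hpr i j) (hpc i j) (hrt i)
  simp only [mul_sub, mul_add, Finset.sum_sub_distrib, Finset.sum_add_distrib, hrow, hcol, htotal,
    hself] at gibbs
  linarith

end NegMulLog

section Empirical

variable {Ω ι κ τ : Type*} {s : Finset Ω}

open Classical in
/-- The proportion of the points of `s` that satisfy `P`; it is `0` when `s` is empty. -/
noncomputable def empiricalProb (s : Finset Ω) (P : Ω → Prop) : ℝ :=
  (#{ω ∈ s | P ω} : ℝ) / #s

theorem empiricalProb_eq_card_div (s : Finset Ω) (P : Ω → Prop) [DecidablePred P] :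
    empiricalProb s P = (#{ω ∈ s | P ω} : ℝ) / #s := by
  rw [empiricalProb]
  congr!

theorem empiricalProb_nonneg (s : Finset Ω) (P : Ω → Prop) : 0 ≤ empiricalProb s P := by
  unfold empiricalProb
  positivity

theorem empiricalProb_le_one (s : Finset Ω) (P : Ω → Prop) : empiricalProb s P ≤ 1 := by
  classical exact div_le_one_of_le₀ (by gcongr; exact Finset.filter_subset P s) (by positivity)

theorem sum_empiricalProb_and_eq [Fintype ι] (s : Finset Ω) (P : Ω → Prop) (f : Ω → ι) :
    ∑ a, empiricalProb s (fun ω ↦ P ω ∧ f ω = a) = empiricalProb s P := by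
  classical
  simp only [empiricalProb, ← Finset.sum_div, ← Nat.cast_sum, ← Finset.filter_filter]
  rw [← Finset.card_eq_sum_card_fiberwise fun ω _ ↦ Finset.mem_coe.2 (Finset.mem_univ (f ω))]

variable [Fintype ι] [Fintype κ] [Fintype τ]

/-- The Shannon entropy, in bits, of the distribution of `f` under the uniform measure on `s`. -/
noncomputable def empiricalEntropy (s : Finset Ω) (f : Ω → ι) : ℝ :=
  (∑ a, Real.negMulLog (empiricalProb s (f · = a))) / Real.log 2

theorem empiricalEntropy_prodMk (s : Finset Ω) (f : Ω → ι) (g : Ω → κ) :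
    empiricalEntropy s (fun ω ↦ (f ω, g ω)) =
      (∑ a, ∑ b, Real.negMulLog (empiricalProb s fun ω ↦ f ω = a ∧ g ω = b)) / Real.log 2 := by
  simp only [empiricalEntropy, Fintype.sum_prod_type, Prod.mk.injEq]

theorem empiricalEntropy_comp_of_injective (s : Finset Ω) (f : Ω → ι) {e : ι → κ}
    (he : e.Injective) : empiricalEntropy s (fun ω ↦ e (f ω)) = empiricalEntropy s f := by
  unfold empiricalEntropy
  congr 1
  refine (Fintype.sum_of_injective e he _ _ (fun b hb ↦ ?_) fun a ↦ ?_).symm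
  · have hne (ω : Ω) : e (f ω) ≠ b := fun h ↦ hb ⟨f ω, h⟩
    simp [hne, empiricalProb]
  · simp only [he.eq_iff]

theorem empiricalEntropy_of_subsingleton [Subsingleton ι] (s : Finset Ω) (f : Ω → ι) :
    empiricalEntropy s f = 0 := by
  have hterm (a : ι) : Real.negMulLog (empiricalProb s (f · = a)) = 0 := by
    rcases s.eq_empty_or_nonempty with rfl | hs
    · simp [empiricalProb]
    · simp [empiricalProb, Subsingleton.elim _ a, hs.ne_empty]
  simp [empiricalEntropy, hterm]

theorem empiricalEntropy_nonneg (s : Finset Ω) (f : Ω → ι) : 0 ≤ empiricalEntropy s f :=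
  div_nonneg
    (Finset.sum_nonneg fun _ _ ↦
      Real.negMulLog_nonneg (empiricalProb_nonneg s _) (empiricalProb_le_one s _))
    (by positivity)

-- Far from the optimal bound `Real.logb 2 (Fintype.card ι)`, but only boundedness matters here.
theorem empiricalEntropy_le_card_div_log_two (s : Finset Ω) (f : Ω → ι) :
    empiricalEntropy s f ≤ Fintype.card ι / Real.log 2 := by
  have hterm (a : ι) : Real.negMulLog (empiricalProb s (f · = a)) ≤ 1 := by
    linarith [Real.negMulLog_le_one_sub_self (empiricalProb_nonneg s (f · = a)),
      empiricalProb_nonneg s (f · = a)]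
  rw [empiricalEntropy]
  gcongr
  simpa using Finset.sum_le_sum fun a (_ : a ∈ Finset.univ) ↦ hterm a

theorem empiricalEntropy_le_prodMk (s : Finset Ω) (f : Ω → ι) (g : Ω → κ) :
    empiricalEntropy s f ≤ empiricalEntropy s fun ω ↦ (f ω, g ω) := by
  rw [empiricalEntropy_prodMk, empiricalEntropy]
  gcongr with a
  rw [← sum_empiricalProb_and_eq s (f · = a) g]
  exact negMulLog_sum_le_sum_negMulLog fun b ↦ empiricalProb_nonneg s _

theorem empiricalEntropy_prodMk_sub (s : Finset Ω) (f : Ω → ι) (g : Ω → κ) :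
    empiricalEntropy s (fun ω ↦ (f ω, g ω)) - empiricalEntropy s f =
      -∑ a, ∑ b, empiricalProb s (fun ω ↦ f ω = a ∧ g ω = b) *
        Real.logb 2 (empiricalProb s (fun ω ↦ f ω = a ∧ g ω = b) / empiricalProb s (f · = a)) := by
  rw [empiricalEntropy_prodMk, empiricalEntropy, ← sub_div, ← Finset.sum_sub_distrib,
    ← Finset.sum_neg_distrib, Finset.sum_div]
  refine Finset.sum_congr rfl fun a _ ↦ ?_
  have chain := sum_negMulLog_sub_negMulLog_sum fun b ↦
    empiricalProb_nonneg s fun ω ↦ f ω = a ∧ g ω = b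
  rw [sum_empiricalProb_and_eq s (f · = a) g] at chain
  simp only [chain, Real.logb, neg_div, Finset.sum_div, mul_div_assoc]

-- Strong subadditivity of entropy: subadditivity of the pair `(f, h)` in each fiber of `g`.
theorem empiricalEntropy_triple_add_le (s : Finset Ω) (f : Ω → ι) (g : Ω → κ) (h : Ω → τ) :
    empiricalEntropy s (fun ω ↦ (g ω, f ω, h ω)) + empiricalEntropy s g ≤
      empiricalEntropy s (fun ω ↦ (g ω, f ω)) + empiricalEntropy s (fun ω ↦ (g ω, h ω)) := by
  have hprob (c : κ) (a : ι) : ∑ b, empiricalProb s (fun ω ↦ g ω = c ∧ f ω = a ∧ h ω = b) =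
      empiricalProb s fun ω ↦ g ω = c ∧ f ω = a := by
    simpa only [and_assoc] using sum_empiricalProb_and_eq s (fun ω ↦ g ω = c ∧ f ω = a) h
  have hprob' (c : κ) (b : τ) : ∑ a, empiricalProb s (fun ω ↦ g ω = c ∧ f ω = a ∧ h ω = b) =
      empiricalProb s fun ω ↦ g ω = c ∧ h ω = b := by
    simpa only [and_assoc, and_comm (a := h _ = b)] using
      sum_empiricalProb_and_eq s (fun ω ↦ g ω = c ∧ h ω = b) f
  simp only [empiricalEntropy_prodMk, Fintype.sum_prod_type, Prod.mk.injEq]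
  rw [empiricalEntropy, ← add_div, ← add_div, ← Finset.sum_add_distrib, ← Finset.sum_add_distrib]
  gcongr (∑ c, ?_) / _ with c
  have subadd := sum_negMulLog_add_negMulLog_sum_le fun a b ↦
    empiricalProb_nonneg s fun ω ↦ g ω = c ∧ f ω = a ∧ h ω = b
  simpa only [hprob, hprob', sum_empiricalProb_and_eq s (g · = c) f] using subadd

end Empirical

section Shift

variable {ι : Type*}

theorem tendsto_sub_of_uniformContinuousOn {α E F : Type*} [SeminormedAddCommGroup E]
    [SeminormedAddCommGroup F] {l : Filter α} {u v : α → E} {g : E → F} {t : Set E}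
    (hg : UniformContinuousOn g t) (hu : ∀ m, u m ∈ t) (hv : ∀ m, v m ∈ t)
    (huv : Tendsto (fun m ↦ u m - v m) l (𝓝 0)) :
    Tendsto (fun m ↦ g (u m) - g (v m)) l (𝓝 0) := by
  simp only [tendsto_zero_iff_norm_tendsto_zero (E := E), ← dist_eq_norm] at huv
  simp only [tendsto_zero_iff_norm_tendsto_zero (E := F), ← dist_eq_norm]
  have hclose : Tendsto (fun m ↦ (u m, v m)) l (uniformity E ⊓ 𝓟 (t ×ˢ t)) :=
    tendsto_inf.2 ⟨tendsto_uniformity_iff_dist_tendsto_zero.2 huv,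
      tendsto_principal.2 (.of_forall fun m ↦ ⟨hu m, hv m⟩)⟩
  exact tendsto_uniformity_iff_dist_tendsto_zero.1 (Tendsto.comp hg hclose)

theorem abs_empiricalProb_succ_sub_le (P : ℕ → Prop) (m : ℕ) :
    |empiricalProb (Finset.range m) (fun i ↦ P (i + 1)) - empiricalProb (Finset.range m) P| ≤
      (m : ℝ)⁻¹ := by
  classical
  have hsum := (Finset.sum_range_succ (fun i ↦ if P i then (1 : ℝ) else 0) m).symm.trans
    (Finset.sum_range_succ' (fun i ↦ if P i then (1 : ℝ) else 0) m)
  simp only [Finset.sum_boole] at hsum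
  simp only [empiricalProb_eq_card_div, Finset.card_range, ← sub_div, abs_div, Nat.abs_cast]
  rw [← one_div]
  gcongr
  rw [abs_le]
  constructor <;> split_ifs at hsum <;> linarith

theorem tendsto_empiricalProb_succ_sub (P : ℕ → Prop) :
    Tendsto (fun m ↦ empiricalProb (Finset.range m) (fun i ↦ P (i + 1)) -
      empiricalProb (Finset.range m) P) atTop (𝓝 0) :=
  squeeze_zero_norm (abs_empiricalProb_succ_sub_le P) tendsto_inv_atTop_nhds_zero_nat

theorem tendsto_empiricalEntropy_succ_sub [Fintype ι] (f : ℕ → ι) :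
    Tendsto (fun m ↦ empiricalEntropy (Finset.range m) (fun i ↦ f (i + 1)) -
      empiricalEntropy (Finset.range m) f) atTop (𝓝 0) := by
  have huc : UniformContinuousOn Real.negMulLog (Set.Icc 0 1) :=
    isCompact_Icc.uniformContinuousOn_of_continuous Real.continuous_negMulLog.continuousOn
  have hmem (P : ℕ → Prop) (m : ℕ) : empiricalProb (Finset.range m) P ∈ Set.Icc 0 1 :=
    ⟨empiricalProb_nonneg _ P, empiricalProb_le_one _ P⟩
  have hterm (a : ι) := tendsto_sub_of_uniformContinuousOn huc (hmem fun i ↦ f (i + 1) = a)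
    (hmem (f · = a)) (tendsto_empiricalProb_succ_sub (f · = a))
  simpa only [empiricalEntropy, ← sub_div, ← Finset.sum_sub_distrib, Finset.sum_const_zero,
    zero_div] using (tendsto_finsetSum Finset.univ fun a _ ↦ hterm a).div_const (Real.log 2)

end Shift

section AsymptoticallyAntitone

variable {ι : Type*} {f : Filter ι}

/-- A sequence of real functions is asymptotically antitone along `f` if it is antitone up to an
error that vanishes along `f`; the vanishing is pointwise in the pair of indices, not uniform. -/
def AsymptoticallyAntitone (f : Filter ι) (d : ℕ → ι → ℝ) : Prop :=
  ∀ ⦃k ℓ : ℕ⦄, k ≤ ℓ → ∀ ε > 0, ∀ᶠ m in f, d ℓ m ≤ d k m + ε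

theorem asymptoticallyAntitone_of_succ_le {d : ℕ → ι → ℝ}
    (hd : ∀ ℓ, ∀ ε > 0, ∀ᶠ m in f, d (ℓ + 1) m ≤ d ℓ m + ε) : AsymptoticallyAntitone f d := by
  intro k ℓ hkℓ
  induction ℓ, hkℓ using Nat.le_induction with
  | base => exact fun ε hε ↦ .of_forall fun m ↦ by linarith
  | succ ℓ _ ih =>
    intro ε hε
    filter_upwards [ih (ε / 2) (by positivity), hd ℓ (ε / 2) (by positivity)] with m hk hsucc
    linarith

theorem limsup_le_limsup_of_eventually_le_add {u v : ι → ℝ}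
    (hu : f.IsCoboundedUnder (· ≤ ·) u) (hv : f.IsBoundedUnder (· ≤ ·) v)
    (huv : ∀ ε > 0, ∀ᶠ m in f, u m ≤ v m + ε) : limsup u f ≤ limsup v f := by
  refine le_of_forall_pos_le_add fun ε hε ↦ limsup_le_of_le hu ?_
  have hlt : limsup v f < limsup v f + ε / 2 := by linarith
  filter_upwards [huv (ε / 2) (by positivity), eventually_lt_of_limsup_lt hlt hv] with m h₁ h₂
  linarith

theorem isBoundedUnder_average {d : ℕ → ι → ℝ} (hbdd : ∀ ℓ, f.IsBoundedUnder (· ≤ ·) (d ℓ))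
    (ℓ : ℕ) :
    f.IsBoundedUnder (· ≤ ·) fun m ↦ (ℓ : ℝ)⁻¹ * ∑ k ∈ Finset.range ℓ, d k m := by
  choose b hb using fun k ↦ hbdd k
  refine ⟨(ℓ : ℝ)⁻¹ * ∑ k ∈ Finset.range ℓ, b k, ?_⟩
  rw [eventually_map]
  filter_upwards [(eventually_all_finset (Finset.range ℓ)).2 fun k _ ↦ eventually_map.1 (hb k)]
    with m hm
  gcongr with k hk
  exact hm k hk

theorem average_add_const {ℓ : ℕ} (hℓ : ℓ ≠ 0) (a : ℕ → ℝ) (ε : ℝ) :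
    (ℓ : ℝ)⁻¹ * ∑ k ∈ Finset.range ℓ, (a k + ε) = (ℓ : ℝ)⁻¹ * ∑ k ∈ Finset.range ℓ, a k + ε := by
  simp [Finset.sum_add_distrib, mul_add, hℓ]

variable [f.NeBot]

theorem isCoboundedUnder_le_of_nonneg {u : ι → ℝ} (hu : ∀ m, 0 ≤ u m) :
    f.IsCoboundedUnder (· ≤ ·) u :=
  (isBoundedUnder_of (r := (· ≥ ·)) ⟨0, hu⟩).isCoboundedUnder_le

variable {d : ℕ → ι → ℝ}

theorem AsymptoticallyAntitone.antitone_limsup (hd : AsymptoticallyAntitone f d)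
    (hnonneg : ∀ ℓ m, 0 ≤ d ℓ m) (hbdd : ∀ ℓ, f.IsBoundedUnder (· ≤ ·) (d ℓ)) :
    Antitone fun ℓ ↦ limsup (d ℓ) f := fun k ℓ hkℓ ↦
  limsup_le_limsup_of_eventually_le_add (isCoboundedUnder_le_of_nonneg (hnonneg ℓ)) (hbdd k)
    (hd hkℓ)

theorem AsymptoticallyAntitone.tendsto_limsup (hd : AsymptoticallyAntitone f d)
    (hnonneg : ∀ ℓ m, 0 ≤ d ℓ m) (hbdd : ∀ ℓ, f.IsBoundedUnder (· ≤ ·) (d ℓ)) :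
    Tendsto (fun ℓ ↦ limsup (d ℓ) f) atTop (𝓝 (⨅ ℓ, limsup (d ℓ) f)) := by
  refine tendsto_atTop_ciInf (hd.antitone_limsup hnonneg hbdd) ⟨0, ?_⟩
  rintro _ ⟨ℓ, rfl⟩
  exact le_limsup_of_frequently_le (Eventually.of_forall (hnonneg ℓ)).frequently (hbdd ℓ)

theorem AsymptoticallyAntitone.limsup_le_limsup_average (hd : AsymptoticallyAntitone f d)
    (hnonneg : ∀ ℓ m, 0 ≤ d ℓ m) (hbdd : ∀ ℓ, f.IsBoundedUnder (· ≤ ·) (d ℓ))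
    {ℓ : ℕ} (hℓ : ℓ ≠ 0) :
    limsup (d ℓ) f ≤ limsup (fun m ↦ (ℓ : ℝ)⁻¹ * ∑ k ∈ Finset.range ℓ, d k m) f := by
  refine limsup_le_limsup_of_eventually_le_add (isCoboundedUnder_le_of_nonneg (hnonneg ℓ))
    (isBoundedUnder_average hbdd ℓ) fun ε hε ↦ ?_
  filter_upwards [(eventually_all_finset (Finset.range ℓ)).2
    fun k hk ↦ hd (Finset.mem_range_le hk) ε hε] with m hm
  calc d ℓ m = (ℓ : ℝ)⁻¹ * ∑ _k ∈ Finset.range ℓ, d ℓ m := by simp [hℓ]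
    _ ≤ (ℓ : ℝ)⁻¹ * ∑ k ∈ Finset.range ℓ, (d k m + ε) := by gcongr with k hk; exact hm k hk
    _ = _ := average_add_const hℓ _ ε

theorem limsup_average_le_average_limsup (hnonneg : ∀ ℓ m, 0 ≤ d ℓ m)
    (hbdd : ∀ ℓ, f.IsBoundedUnder (· ≤ ·) (d ℓ)) {ℓ : ℕ} (hℓ : ℓ ≠ 0) :
    limsup (fun m ↦ (ℓ : ℝ)⁻¹ * ∑ k ∈ Finset.range ℓ, d k m) f ≤
      (ℓ : ℝ)⁻¹ * ∑ k ∈ Finset.range ℓ, limsup (d k) f := by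
  have hcobdd : f.IsCoboundedUnder (· ≤ ·) fun m ↦ (ℓ : ℝ)⁻¹ * ∑ k ∈ Finset.range ℓ, d k m :=
    isCoboundedUnder_le_of_nonneg fun m ↦
      mul_nonneg (by positivity) (Finset.sum_nonneg fun k _ ↦ hnonneg k m)
  refine le_of_forall_pos_le_add fun ε hε ↦ limsup_le_of_le hcobdd ?_
  filter_upwards [(eventually_all_finset (Finset.range ℓ)).2 fun k _ ↦
    eventually_lt_of_limsup_lt (lt_add_of_pos_right (limsup (d k) f) hε) (hbdd k)] with m hm
  rw [← average_add_const hℓ]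
  gcongr with k hk
  exact (hm k hk).le

theorem AsymptoticallyAntitone.tendsto_limsup_average (hd : AsymptoticallyAntitone f d)
    (hnonneg : ∀ ℓ m, 0 ≤ d ℓ m) (hbdd : ∀ ℓ, f.IsBoundedUnder (· ≤ ·) (d ℓ)) :
    Tendsto (fun ℓ : ℕ ↦ limsup (fun m ↦ (ℓ : ℝ)⁻¹ * ∑ k ∈ Finset.range ℓ, d k m) f) atTop
      (𝓝 (⨅ ℓ, limsup (d ℓ) f)) := by
  have hlim := hd.tendsto_limsup hnonneg hbdd
  refine tendsto_of_tendsto_of_tendsto_of_le_of_le' hlim hlim.cesaro ?_ ?_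
  · filter_upwards [eventually_ne_atTop 0] with ℓ hℓ
    exact hd.limsup_le_limsup_average hnonneg hbdd hℓ
  · filter_upwards [eventually_ne_atTop 0] with ℓ hℓ
    exact limsup_average_le_average_limsup hnonneg hbdd hℓ

end AsymptoticallyAntitone

section Windows

variable {α : Type*}

/-- The factor `x[i:i+ℓ)` as a function on `Fin ℓ`. -/
def window (x : ℕ → α) (ℓ i : ℕ) : Fin ℓ → α :=
  fun j ↦ x (i + j)

theorem window_succ_eq_snoc (x : ℕ → α) (ℓ i : ℕ) :
    window x (ℓ + 1) i = Fin.snoc (α := fun _ ↦ α) (window x ℓ i) (x (i + ℓ)) := by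
  funext j
  refine Fin.lastCases ?_ (fun j ↦ ?_) j <;> simp [window]

theorem window_succ_eq_cons (x : ℕ → α) (ℓ i : ℕ) :
    window x (ℓ + 1) i = Fin.cons (α := fun _ ↦ α) (x i) (window x ℓ (i + 1)) := by
  funext j
  refine Fin.cases ?_ (fun j ↦ ?_) j <;> simp [window, add_assoc, add_comm 1]

theorem window_shift (x : ℕ → α) (ℓ : ℕ) :
    window (fun i ↦ x (i + 1)) ℓ = fun i ↦ window x ℓ (i + 1) := by
  funext i j
  simp only [window, add_right_comm]

variable [Fintype α]

/-- The entropy, in bits, of the windows of length `ℓ` starting at the positions `i < m` of `x`. -/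
noncomputable def blockEntropy (x : ℕ → α) (ℓ m : ℕ) : ℝ :=
  empiricalEntropy (Finset.range m) (window x ℓ)

theorem blockEntropy_zero (x : ℕ → α) (m : ℕ) : blockEntropy x 0 m = 0 :=
  empiricalEntropy_of_subsingleton _ _

theorem blockEntropy_succ_eq_prodMk (x : ℕ → α) (ℓ m : ℕ) :
    blockEntropy x (ℓ + 1) m =
      empiricalEntropy (Finset.range m) fun i ↦ (window x ℓ i, x (i + ℓ)) := by
  let e (p : (Fin ℓ → α) × α) : Fin (ℓ + 1) → α := Fin.snoc (α := fun _ ↦ α) p.1 p.2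
  have hinj : e.Injective := by
    rintro ⟨v, a⟩ ⟨v', a'⟩ h
    obtain ⟨rfl, rfl⟩ := Fin.snoc_inj.1 h
    rfl
  have hwindow : window x (ℓ + 1) = fun i ↦ e (window x ℓ i, x (i + ℓ)) :=
    funext (window_succ_eq_snoc x ℓ)
  rw [blockEntropy, hwindow]
  exact empiricalEntropy_comp_of_injective _ _ hinj

theorem blockEntropy_succ_eq_prodMk_shift (x : ℕ → α) (ℓ m : ℕ) :
    blockEntropy x (ℓ + 1) m =
      empiricalEntropy (Finset.range m) fun i ↦ (window x ℓ (i + 1), x i) := by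
  let e (p : (Fin ℓ → α) × α) : Fin (ℓ + 1) → α := Fin.cons (α := fun _ ↦ α) p.2 p.1
  have hinj : e.Injective := by
    rintro ⟨v, a⟩ ⟨v', a'⟩ h
    obtain ⟨rfl, rfl⟩ := Fin.cons_inj.1 h
    rfl
  have hwindow : window x (ℓ + 1) = fun i ↦ e (window x ℓ (i + 1), x i) :=
    funext (window_succ_eq_cons x ℓ)
  rw [blockEntropy, hwindow]
  exact empiricalEntropy_comp_of_injective _ _ hinj

theorem blockEntropy_add_two_eq_triple (x : ℕ → α) (ℓ m : ℕ) :
    blockEntropy x (ℓ + 2) m =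
      empiricalEntropy (Finset.range m)
        fun i ↦ (window x ℓ (i + 1), x i, x (i + 1 + ℓ)) := by
  let e (p : (Fin ℓ → α) × α × α) : Fin (ℓ + 2) → α :=
    Fin.cons (α := fun _ ↦ α) p.2.1 (Fin.snoc (α := fun _ ↦ α) p.1 p.2.2)
  have hinj : e.Injective := by
    rintro ⟨v, a, b⟩ ⟨v', a', b'⟩ h
    obtain ⟨rfl, hsnoc⟩ := Fin.cons_inj.1 h
    obtain ⟨rfl, rfl⟩ := Fin.snoc_inj.1 hsnoc
    rfl
  have hwindow : window x (ℓ + 2) = fun i ↦ e (window x ℓ (i + 1), x i, x (i + 1 + ℓ)) := by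
    funext i
    rw [window_succ_eq_cons, window_succ_eq_snoc]
  rw [blockEntropy, hwindow]
  exact empiricalEntropy_comp_of_injective _ _ hinj

/-- The conditional entropy of a symbol given the `ℓ` preceding ones, in the statistics of the
windows starting at the positions `i < m` of `x`. -/
noncomputable def entropyIncrement (x : ℕ → α) (ℓ m : ℕ) : ℝ :=
  blockEntropy x (ℓ + 1) m - blockEntropy x ℓ m

theorem sum_range_entropyIncrement (x : ℕ → α) (ℓ m : ℕ) :
    ∑ k ∈ Finset.range ℓ, entropyIncrement x k m = blockEntropy x ℓ m := by
  simp only [entropyIncrement, Finset.sum_range_sub (blockEntropy x · m), blockEntropy_zero,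
    sub_zero]

theorem entropyIncrement_nonneg (x : ℕ → α) (ℓ m : ℕ) : 0 ≤ entropyIncrement x ℓ m := by
  rw [entropyIncrement, blockEntropy_succ_eq_prodMk, sub_nonneg]
  exact empiricalEntropy_le_prodMk _ _ _

theorem isBoundedUnder_entropyIncrement (x : ℕ → α) (ℓ : ℕ) :
    atTop.IsBoundedUnder (· ≤ ·) (entropyIncrement x ℓ) :=
  isBoundedUnder_of ⟨_, fun _ ↦ (sub_le_self _ (empiricalEntropy_nonneg _ _)).trans
    (empiricalEntropy_le_card_div_log_two _ _)⟩

theorem entropyIncrement_succ_le_shift (x : ℕ → α) (ℓ m : ℕ) :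
    entropyIncrement x (ℓ + 1) m ≤ entropyIncrement (fun i ↦ x (i + 1)) ℓ m := by
  have hsubmodular := empiricalEntropy_triple_add_le (Finset.range m) x
    (fun i ↦ window x ℓ (i + 1)) (fun i ↦ x (i + 1 + ℓ))
  have hlong := blockEntropy_succ_eq_prodMk (fun i ↦ x (i + 1)) ℓ m
  simp only [window_shift, add_right_comm _ ℓ 1] at hlong
  rw [← blockEntropy_add_two_eq_triple, ← blockEntropy_succ_eq_prodMk_shift, ← hlong]
    at hsubmodular
  simp only [entropyIncrement, blockEntropy.eq_1 _ ℓ, window_shift]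
  linarith

theorem tendsto_blockEntropy_shift_sub (x : ℕ → α) (ℓ : ℕ) :
    Tendsto (fun m ↦ blockEntropy (fun i ↦ x (i + 1)) ℓ m - blockEntropy x ℓ m) atTop (𝓝 0) := by
  simpa only [blockEntropy, window_shift] using tendsto_empiricalEntropy_succ_sub (window x ℓ)

theorem tendsto_entropyIncrement_shift_sub (x : ℕ → α) (ℓ : ℕ) :
    Tendsto (fun m ↦ entropyIncrement (fun i ↦ x (i + 1)) ℓ m - entropyIncrement x ℓ m) atTop
      (𝓝 0) := by
  simpa only [entropyIncrement, sub_sub_sub_comm, sub_zero] using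
    (tendsto_blockEntropy_shift_sub x (ℓ + 1)).sub (tendsto_blockEntropy_shift_sub x ℓ)

theorem asymptoticallyAntitone_entropyIncrement (x : ℕ → α) :
    AsymptoticallyAntitone atTop (entropyIncrement x) := by
  refine asymptoticallyAntitone_of_succ_le fun ℓ ε hε ↦ ?_
  filter_upwards [(tendsto_entropyIncrement_shift_sub x ℓ).eventually_le_const hε] with m hm
  linarith [entropyIncrement_succ_le_shift x ℓ m]

end Windows

section BoolWords

variable (x : ℕ → Bool)

theorem factor_eq_ofFn_window (ℓ i : ℕ) : factor x i ℓ = List.ofFn (window x ℓ i) := rfl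

theorem occ_ofFn (n : ℕ) {ℓ : ℕ} (u : Fin ℓ → Bool) :
    occ x n (List.ofFn u) = #{i ∈ Finset.range (n + 1 - ℓ) | window x ℓ i = u} := by
  simp only [occ, List.length_ofFn, factor_eq_ofFn_window, List.ofFn_inj]

theorem occ_ofFn_append_singleton (n : ℕ) {ℓ : ℕ} (u : Fin ℓ → Bool) (a : Bool) :
    occ x n (List.ofFn u ++ [a]) =
      #{i ∈ Finset.range (n - ℓ) | window x ℓ i = u ∧ x (i + ℓ) = a} := by
  have hsnoc : List.ofFn u ++ [a] = List.ofFn (Fin.snoc (α := fun _ ↦ Bool) u a) := by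
    rw [List.ofFn_succ_last]
    simp
  simp only [hsnoc, occ_ofFn, window_succ_eq_snoc, Fin.snoc_inj, Nat.add_sub_add_right]

theorem hBlock_add_eq (ℓ m : ℕ) :
    hBlock ℓ x (m + ℓ) = (ℓ : ℝ)⁻¹ * blockEntropy x ℓ (m + 1) := by
  have hprob (u : Fin ℓ → Bool) : (occ x (m + ℓ) (List.ofFn u) : ℝ) / ((m + ℓ : ℕ) - ℓ + 1) =
      empiricalProb (Finset.range (m + 1)) (window x ℓ · = u) := by
    rw [occ_ofFn, empiricalProb_eq_card_div, Finset.card_range, show m + ℓ + 1 - ℓ = m + 1 by omega]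
    push_cast
    ring_nf
  simp only [hBlock, hprob, blockEntropy, empiricalEntropy, Real.negMulLog, Real.logb, neg_mul,
    Finset.sum_neg_distrib, mul_div_assoc', ← Finset.sum_div]
  ring

theorem condEntropy_add_eq (ℓ m : ℕ) :
    condEntropy ℓ x (m + 1 + ℓ) = entropyIncrement x ℓ (m + 1) := by
  have hlen : ((m + 1 + ℓ : ℕ) : ℝ) - ℓ = (m + 1 : ℕ) := by push_cast; ring
  have hprob (u : Fin ℓ → Bool) : (occ x (m + 1 + ℓ - 1) (List.ofFn u) : ℝ) / (m + 1 : ℕ) =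
      empiricalProb (Finset.range (m + 1)) (window x ℓ · = u) := by
    rw [occ_ofFn, empiricalProb_eq_card_div, Finset.card_range,
      show m + 1 + ℓ - 1 + 1 - ℓ = m + 1 by omega]
  have hjoint (u : Fin ℓ → Bool) (a : Bool) :
      (occ x (m + 1 + ℓ) (List.ofFn u ++ [a]) : ℝ) / (m + 1 : ℕ) =
        empiricalProb (Finset.range (m + 1)) fun i ↦ window x ℓ i = u ∧ x (i + ℓ) = a := by
    rw [occ_ofFn_append_singleton, empiricalProb_eq_card_div, Finset.card_range,
      Nat.add_sub_cancel]
  have drop_ite {p : ℝ} (hp : 0 ≤ p) (c : ℝ) : (if 0 < p then p * c else 0) = p * c := by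
    grind
  rw [entropyIncrement, blockEntropy_succ_eq_prodMk, blockEntropy, empiricalEntropy_prodMk_sub]
  simp only [condEntropy, hlen, hprob, hjoint, drop_ite (empiricalProb_nonneg _ _)]

theorem limsup_hBlock (ℓ : ℕ) :
    atTop.limsup (fun n ↦ hBlock ℓ x n) =
      atTop.limsup fun m ↦ (ℓ : ℝ)⁻¹ * ∑ k ∈ Finset.range ℓ, entropyIncrement x k m := by
  rw [← limsup_nat_add _ ℓ, ← limsup_nat_add (fun m ↦ _ * _) 1]
  simp only [hBlock_add_eq, sum_range_entropyIncrement]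

theorem limsup_condEntropy (ℓ : ℕ) :
    atTop.limsup (fun n ↦ condEntropy ℓ x n) = atTop.limsup (entropyIncrement x ℓ) := by
  rw [← limsup_nat_add _ (1 + ℓ), ← limsup_nat_add (entropyIncrement x ℓ) 1]
  simp only [← add_assoc, condEntropy_add_eq]

end BoolWords

theorem tendsto_limsup_condEntropy (x : ℕ → Bool) :
    Filter.Tendsto (fun ℓ => atTop.limsup fun n => condEntropy ℓ x n) atTop
      (nhds (hUp x)) := by
  have hanti := asymptoticallyAntitone_entropyIncrement x
  have hnonneg := entropyIncrement_nonneg x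
  have hbdd := isBoundedUnder_entropyIncrement x
  have hUp_eq : hUp x = ⨅ ℓ, atTop.limsup (entropyIncrement x ℓ) := by
    simp only [hUp, limsup_hBlock]
    exact (hanti.tendsto_limsup_average hnonneg hbdd).limsup_eq
  simp only [hUp_eq, limsup_condEntropy]
  exact hanti.tendsto_limsup hnonneg hbdd
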